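/- arXiv:2011.05835 — 2 statements merged into one kernel-verified Lean document; each statement's English description precedes it below -/
import Mathlib

section
/- Let X = ℓ∞³, Y = ℓ₁³, and let T : X → Y be a bounded linear operator with ‖T‖ = 1 such that M_T ∩ Ext(B_X) = {±x₁, ±x₂, ±x₃, ±x₄}. Suppose Tx is smooth for every x ∈ M_T ∩ Ext(B_X) (i.e., |S₁| = 8), and suppose ±J(Tx_i) = ±J(Tx_j) for all x_i, x_j ∈ S₁. Then T is 3-smooth, i.e., dim span J(T) = 3. -/
open Metric Set Module Pointwise

noncomputable section

/-- `J x` is the set of supporting functionals of `x`. -/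
def suppFunctionals {E : Type*} [NormedAddCommGroup E] [NormedSpace ℝ E] (x : E) :
    Set (E →L[ℝ] ℝ) := {f | ‖f‖ = 1 ∧ f x = 1}

/-- ℓ∞³ : ℝ³ with the max norm. -/
abbrev Linf3 := Fin 3 → ℝ

/-- ℓ₁³ : ℝ³ with the ℓ¹ norm. -/
abbrev L13 := PiLp 1 (fun _ : Fin 3 => ℝ)

def x₁ : Linf3 := ![1, 1, 1]
def x₂ : Linf3 := ![-1, 1, 1]
def x₃ : Linf3 := ![-1, -1, 1]
def x₄ : Linf3 := ![1, -1, 1]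

/-- `M_T ∩ Ext(B_X)`: the norm-attainment set of `T` intersected with the
extreme points of the closed unit ball. -/
def MTExt (T : Linf3 →L[ℝ] L13) : Set Linf3 :=
  {x ∈ sphere (0 : Linf3) 1 | ‖T x‖ = ‖T‖} ∩ extremePoints ℝ (closedBall (0 : Linf3) 1)

/-- `Sk T k` is the set `S_k` of points `x` of `M_T ∩ Ext(B_X)` such that `T x` is
`k`-smooth. -/
def Sk (T : Linf3 →L[ℝ] L13) (k : ℕ) : Set Linf3 :=
  {x ∈ MTExt T | finrank ℝ (Submodule.span ℝ (suppFunctionals (T x))) = k}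

/-- `±A`, i.e. `A ∪ (-A)`. -/
def pm {E : Type*} [NormedAddCommGroup E] [NormedSpace ℝ E] (A : Set (E →L[ℝ] ℝ)) :
    Set (E →L[ℝ] ℝ) := A ∪ (-A)

/-!
Let `v₁, …, vₙ` be the extreme points of a polyhedral unit ball of `X`. An operator attains its
norm at one of them, so `A ↦ (A v₁, …, A vₙ)` embeds `L(X, Y)` isometrically into `Yⁿ` with the max
norm. By Hahn–Banach every `F ∈ J(T)` extends to a norm-one functional on `Yⁿ`, whose `i`-th
component must then be a multiple of a supporting functional of `T vᵢ`. Hence `J(T)` and the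
elementary tensors `g ⊗ vᵢ : A ↦ g (A vᵢ)` with `g ∈ J(T vᵢ)` have the same span. If all the
nonempty `J(T vᵢ)` span one and the same line `ℝ g`, this span is `g ⊗ span (M_T ∩ Ext(B_X))`, and
`x ↦ g ⊗ x` is injective.
-/

lemma exists_ne_zero_eq_span_singleton_of_finrank_eq_one {K V : Type*} [DivisionRing K]
    [AddCommGroup V] [Module K V] {W : Submodule K V} (hW : finrank K W = 1) :
    ∃ v ≠ 0, W = K ∙ v := by
  obtain ⟨v, hvW, hv, hle⟩ :=
    (rank_submodule_eq_one_iff W).1 (rank_eq_one_iff_finrank_eq_one.2 hW)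
  exact ⟨v, hv, hle.antisymm ((Submodule.span_singleton_le_iff_mem v W).2 hvW)⟩

lemma exists_dual_extension_of_linearIsometry {𝕜 E E' : Type*} [RCLike 𝕜]
    [NormedAddCommGroup E] [NormedSpace 𝕜 E] [NormedAddCommGroup E'] [NormedSpace 𝕜 E']
    (R : E →ₗᵢ[𝕜] E') (F : E →L[𝕜] 𝕜) :
    ∃ G : E' →L[𝕜] 𝕜, ‖G‖ = ‖F‖ ∧ ∀ x, G (R x) = F x := by
  let F' : LinearMap.range R.toLinearMap →L[𝕜] 𝕜 :=
    F.comp (R.equivRange.symm.toContinuousLinearEquiv : _ →L[𝕜] E)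
  obtain ⟨G, hG, hnorm⟩ := exists_extension_norm_eq _ F'
  refine ⟨G, hnorm.trans (F.opNorm_comp_linearIsometryEquiv R.equivRange.symm), fun x ↦ ?_⟩
  simpa [F'] using hG (R.equivRange x)

section SupportingFunctionals

variable {E : Type*} [NormedAddCommGroup E] [NormedSpace ℝ E]

lemma mem_suppFunctionals_of_norm_le {f : E →L[ℝ] ℝ} {x : E} (hf : ‖f‖ ≤ 1) (hx : ‖x‖ ≤ 1)
    (h : f x = 1) : f ∈ suppFunctionals x := by
  have hle : ‖f x‖ ≤ ‖f‖ := f.unit_le_opNorm x hx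
  rw [h, norm_one] at hle
  exact ⟨hf.antisymm hle, h⟩

lemma one_le_norm_of_mem_suppFunctionals {f : E →L[ℝ] ℝ} {x : E} (hf : f ∈ suppFunctionals x) :
    1 ≤ ‖x‖ := by
  simpa [hf.1, hf.2] using f.le_opNorm x

lemma mem_span_suppFunctionals_of_norm_le_apply {f : E →L[ℝ] ℝ} {x : E} (hx : ‖x‖ ≤ 1)
    (h : ‖f‖ ≤ f x) : f ∈ Submodule.span ℝ (suppFunctionals x) := by
  rcases eq_or_ne f 0 with rfl | hf
  · exact Submodule.zero_mem _
  have hnorm : ‖f‖ ≠ 0 := norm_ne_zero_iff.2 hf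
  have hfx : f x = ‖f‖ := ((le_abs_self _).trans (f.unit_le_opNorm x hx)).antisymm h
  have hmem : ‖f‖⁻¹ • f ∈ suppFunctionals x :=
    ⟨norm_smul_inv_norm hf, by simp [hfx, hnorm]⟩
  simpa [smul_smul, hnorm] using Submodule.smul_mem _ ‖f‖ (Submodule.subset_span hmem)

lemma span_pm (A : Set (E →L[ℝ] ℝ)) : Submodule.span ℝ (pm A) = Submodule.span ℝ A := by
  rw [pm, Submodule.span_union, Submodule.span_neg, sup_idem]

variable {ι : Type*} [Fintype ι] [DecidableEq ι]

lemma comp_single_mem_span_suppFunctionals {G : (ι → E) →L[ℝ] ℝ} {y : ι → E} (hy : ‖y‖ ≤ 1)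
    (hG : G ∈ suppFunctionals y) (i : ι) :
    G.comp (.single ℝ (fun _ ↦ E) i) ∈ Submodule.span ℝ (suppFunctionals (y i)) := by
  set g := G.comp (.single ℝ (fun _ ↦ E) i)
  -- `G` is maximal at `y` on the unit ball; compare with `y` changed to `z` in coordinate `i`.
  have hmax : ∀ z, ‖z‖ ≤ 1 → g z ≤ g (y i) := fun z hz ↦ by
    have hnorm : ‖Function.update y i z‖ ≤ 1 := by
      refine (pi_norm_le_iff_of_nonneg zero_le_one).2 fun j ↦ ?_
      rcases eq_or_ne j i with rfl | hj
      · simpa using hz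
      · simpa [hj] using (norm_le_pi_norm y j).trans hy
    have hle : G (Function.update y i z) ≤ G y := by
      calc G (Function.update y i z) ≤ ‖G‖ :=
            (le_abs_self _).trans (G.unit_le_opNorm _ hnorm)
        _ = G y := hG.1.trans hG.2.symm
    have hsplit : Function.update y i z = y + Pi.single i (z - y i) := by
      ext j
      rcases eq_or_ne j i with rfl | hj <;> simp [*]
    rw [hsplit, map_add] at hle
    have : g (z - y i) ≤ 0 := by simpa [g] using hle
    simpa using this
  refine mem_span_suppFunctionals_of_norm_le_apply ((norm_le_pi_norm y i).trans hy) ?_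
  refine ContinuousLinearMap.opNorm_le_of_unit_norm (by simpa using hmax 0 (by simp)) fun z hz ↦ ?_
  exact abs_le'.2 ⟨hmax z hz.le, by simpa using hmax (-z) (by simp [hz])⟩

end SupportingFunctionals

section ElementaryTensors

variable {X Y : Type*} [NormedAddCommGroup X] [NormedSpace ℝ X]
  [NormedAddCommGroup Y] [NormedSpace ℝ Y]

/-- The elementary tensor `g ⊗ x`, viewed as the functional `A ↦ g (A x)` on operators. It is
bundled as a bilinear map, so that spans can be transported along either argument. -/
def dualTensor : (Y →L[ℝ] ℝ) →L[ℝ] X →L[ℝ] ((X →L[ℝ] Y) →L[ℝ] ℝ) :=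
  (ContinuousLinearMap.compL ℝ (X →L[ℝ] Y) Y ℝ).bilinearComp (.id ℝ _) (.apply ℝ Y)

@[simp]
lemma dualTensor_apply (g : Y →L[ℝ] ℝ) (x : X) (A : X →L[ℝ] Y) : dualTensor g x A = g (A x) := rfl

lemma norm_dualTensor_le (g : Y →L[ℝ] ℝ) (x : X) :
    ‖(dualTensor g x : (X →L[ℝ] Y) →L[ℝ] ℝ)‖ ≤ ‖g‖ * ‖x‖ := by
  refine ContinuousLinearMap.opNorm_le_bound _ (by positivity) fun A ↦ ?_
  calc ‖g (A x)‖ ≤ ‖g‖ * ‖A x‖ := g.le_opNorm _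
    _ ≤ ‖g‖ * (‖A‖ * ‖x‖) := by gcongr; exact A.le_opNorm x
    _ = ‖g‖ * ‖x‖ * ‖A‖ := by ring

lemma dualTensor_injective {g : Y →L[ℝ] ℝ} (hg : g ≠ 0) :
    Function.Injective (dualTensor g : X →L[ℝ] ((X →L[ℝ] Y) →L[ℝ] ℝ)) := by
  intro x x' h
  obtain ⟨y, hy⟩ : ∃ y, g y ≠ 0 := DFunLike.ne_iff.1 hg
  refine (SeparatingDual.eq_iff_forall_dual_eq (R := ℝ)).2 fun φ ↦ ?_
  simpa [hy] using DFunLike.congr_fun h (φ.smulRight y)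

lemma dualTensor_mem_suppFunctionals {T : X →L[ℝ] Y} (hT : ‖T‖ ≤ 1) {x : X} (hx : ‖x‖ ≤ 1)
    {g : Y →L[ℝ] ℝ} (hg : g ∈ suppFunctionals (T x)) : dualTensor g x ∈ suppFunctionals T :=
  mem_suppFunctionals_of_norm_le
    ((norm_dualTensor_le g x).trans (by rwa [hg.1, one_mul])) hT hg.2

end ElementaryTensors

section PolyhedralDomain

variable {X Y : Type*} [NormedAddCommGroup X] [NormedSpace ℝ X]
  [NormedAddCommGroup Y] [NormedSpace ℝ Y]

lemma opNorm_le_of_closedBall_subset_convexHull {V : Set X}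
    (hV : closedBall (0 : X) 1 ⊆ convexHull ℝ V) {A : X →L[ℝ] Y} {C : ℝ} (hC : 0 ≤ C)
    (hA : ∀ v ∈ V, ‖A v‖ ≤ C) : ‖A‖ ≤ C := by
  have hhull : convexHull ℝ V ⊆ A ⁻¹' closedBall 0 C :=
    convexHull_min (fun v hv ↦ by simpa using hA v hv)
      ((convex_closedBall 0 C).linear_preimage A.toLinearMap)
  refine ContinuousLinearMap.opNorm_le_of_unit_norm hC fun x hx ↦ ?_
  simpa using hhull (hV (by simp [hx]))

lemma convexHull_extremePoints_closedBall [FiniteDimensional ℝ X]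
    (hX : (extremePoints ℝ (closedBall (0 : X) 1)).Finite) :
    convexHull ℝ (extremePoints ℝ (closedBall (0 : X) 1)) = closedBall 0 1 := by
  have := FiniteDimensional.proper_real X
  rw [← (hX.isClosed_convexHull ℝ).closure_eq]
  exact closure_convexHull_extremePoints (isCompact_closedBall 0 1) (convex_closedBall 0 1)

variable {ι : Type*} {v : ι → X}

/-- Evaluation of operators at finitely many points whose convex hull is the unit ball, as an
isometric embedding into a finite power of the codomain with the maximum norm. -/
def evalIsometry [Fintype ι] (hv : convexHull ℝ (range v) = closedBall (0 : X) 1) :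
    (X →L[ℝ] Y) →ₗᵢ[ℝ] (ι → Y) where
  toFun A i := A (v i)
  map_add' _ _ := rfl
  map_smul' _ _ := rfl
  norm_map' A := by
    refine le_antisymm ((pi_norm_le_iff_of_nonneg (norm_nonneg A)).2 fun i ↦ ?_) ?_
    · refine A.unit_le_opNorm (v i) ?_
      simpa using hv.subset (subset_convexHull ℝ _ (mem_range_self i))
    · refine opNorm_le_of_closedBall_subset_convexHull hv.superset (norm_nonneg _) ?_
      rintro _ ⟨i, rfl⟩
      exact norm_le_pi_norm (fun i ↦ A (v i)) i

@[simp]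
lemma evalIsometry_apply [Fintype ι] (hv : convexHull ℝ (range v) = closedBall (0 : X) 1)
    (A : X →L[ℝ] Y) (i : ι) : evalIsometry (Y := Y) hv A i = A (v i) := rfl

theorem span_suppFunctionals_eq_iSup [Finite ι]
    (hv : convexHull ℝ (range v) = closedBall (0 : X) 1) {T : X →L[ℝ] Y} (hT : ‖T‖ ≤ 1) :
    Submodule.span ℝ (suppFunctionals T) =
      ⨆ i, (Submodule.span ℝ (suppFunctionals (T (v i)))).map
        (dualTensor.flip (v i)).toLinearMap := by
  classical
  cases nonempty_fintype ι
  refine le_antisymm (Submodule.span_le.2 fun F hF ↦ ?_) (iSup_le fun i ↦ ?_)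
  · let R := evalIsometry (Y := Y) hv
    obtain ⟨G, hGF, hG⟩ := exists_dual_extension_of_linearIsometry R F
    have hGT : G ∈ suppFunctionals (R T) := ⟨hGF.trans hF.1, (hG T).trans hF.2⟩
    have hsum : F = ∑ i, dualTensor (G.comp (.single ℝ (fun _ ↦ Y) i)) (v i) := by
      ext A
      simpa [R, ← hG] using (ContinuousLinearMap.sum_comp_single ℝ (fun _ ↦ Y) G (R A)).symm
    rw [hsum]
    refine Submodule.sum_mem _ fun i _ ↦ Submodule.mem_iSup_of_mem i ?_
    exact Submodule.mem_map_of_mem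
      (comp_single_mem_span_suppFunctionals ((R.norm_map T).trans_le hT) hGT i)
  · have hvi : ‖v i‖ ≤ 1 := by simpa using hv.subset (subset_convexHull ℝ _ (mem_range_self i))
    rw [Submodule.map_span]
    refine Submodule.span_mono ?_
    rintro _ ⟨g, hg, rfl⟩
    exact dualTensor_mem_suppFunctionals hT hvi hg

/-- `M_T ∩ Ext(B_X)` for an operator between arbitrary normed spaces. -/
def normAttainingExtremePoints (T : X →L[ℝ] Y) : Set X :=
  {x ∈ sphere (0 : X) 1 | ‖T x‖ = ‖T‖} ∩ extremePoints ℝ (closedBall (0 : X) 1)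

lemma mem_normAttainingExtremePoints_of_mem_suppFunctionals {T : X →L[ℝ] Y} (hT : ‖T‖ = 1) {x : X}
    (hx : x ∈ extremePoints ℝ (closedBall (0 : X) 1)) {g : Y →L[ℝ] ℝ}
    (hg : g ∈ suppFunctionals (T x)) : x ∈ normAttainingExtremePoints T := by
  have hx1 : ‖x‖ ≤ 1 := by simpa using hx.1
  have hTx : 1 ≤ ‖T x‖ := one_le_norm_of_mem_suppFunctionals hg
  have hTx' : ‖T x‖ ≤ ‖x‖ := by simpa [hT] using T.le_opNorm x
  refine ⟨⟨?_, ?_⟩, hx⟩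
  · simpa using hx1.antisymm (hTx.trans hTx')
  · linarith

theorem span_suppFunctionals_eq_map_dualTensor [FiniteDimensional ℝ X] {T : X →L[ℝ] Y}
    (hT : ‖T‖ = 1) (hX : (extremePoints ℝ (closedBall (0 : X) 1)).Finite) {g : Y →L[ℝ] ℝ}
    (hg : ∀ x ∈ normAttainingExtremePoints T, Submodule.span ℝ (suppFunctionals (T x)) = ℝ ∙ g) :
    Submodule.span ℝ (suppFunctionals T) =
      (Submodule.span ℝ (normAttainingExtremePoints T)).map (dualTensor g).toLinearMap := by
  have := hX.to_subtype
  have hhull : convexHull ℝ (range ((↑) : extremePoints ℝ (closedBall (0 : X) 1) → X)) =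
      closedBall 0 1 := by
    rw [Subtype.range_coe, convexHull_extremePoints_closedBall hX]
  rw [span_suppFunctionals_eq_iSup hhull hT.le]
  refine le_antisymm (iSup_le fun x ↦ ?_) ?_
  · rcases (suppFunctionals (T x)).eq_empty_or_nonempty with hempty | ⟨f, hf⟩
    · simp [hempty]
    · have hx := mem_normAttainingExtremePoints_of_mem_suppFunctionals hT x.2 hf
      rw [hg x hx, Submodule.map_span, image_singleton, Submodule.span_singleton_le_iff_mem]
      exact Submodule.mem_map_of_mem (Submodule.subset_span hx)
  · rw [Submodule.map_span, Submodule.span_le]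
    rintro _ ⟨x, hx, rfl⟩
    refine Submodule.mem_iSup_of_mem ⟨x, hx.2⟩ (Submodule.mem_map_of_mem ?_)
    rw [hg x hx]
    exact Submodule.mem_span_singleton_self g

theorem stmt_9_general [FiniteDimensional ℝ X] (T : X →L[ℝ] Y) (hT : ‖T‖ = 1)
    (hX : (extremePoints ℝ (closedBall (0 : X) 1)).Finite)
    (hsmooth : ∀ x ∈ normAttainingExtremePoints T,
      finrank ℝ (Submodule.span ℝ (suppFunctionals (T x))) = 1)
    (hJ : ∀ x ∈ normAttainingExtremePoints T, ∀ y ∈ normAttainingExtremePoints T,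
      pm (suppFunctionals (T x)) = pm (suppFunctionals (T y))) :
    finrank ℝ (Submodule.span ℝ (suppFunctionals T)) =
      finrank ℝ (Submodule.span ℝ (normAttainingExtremePoints T)) := by
  rcases (normAttainingExtremePoints T).eq_empty_or_nonempty with hempty | ⟨x₀, hx₀⟩
  · rw [span_suppFunctionals_eq_map_dualTensor hT hX (g := 0) (by simp [hempty]), hempty,
      Submodule.span_empty, Submodule.map_bot, finrank_bot, finrank_bot]
  obtain ⟨g, hg, hspan⟩ := exists_ne_zero_eq_span_singleton_of_finrank_eq_one (hsmooth x₀ hx₀)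
  have hconst : ∀ x ∈ normAttainingExtremePoints T,
      Submodule.span ℝ (suppFunctionals (T x)) = ℝ ∙ g := fun x hx ↦ by
    rw [← span_pm, hJ x hx x₀ hx₀, span_pm, hspan]
  rw [span_suppFunctionals_eq_map_dualTensor hT hX hconst]
  exact (Submodule.equivMapOfInjective _ (dualTensor_injective hg) _).finrank_eq.symm

end PolyhedralDomain

section Cube

lemma finite_extremePoints_closedBall_pi (ι : Type*) [Fintype ι] :
    (extremePoints ℝ (closedBall (0 : ι → ℝ) 1)).Finite := by
  rw [closedBall_pi _ zero_le_one, extremePoints_pi]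
  refine Finite.pi fun i ↦ ?_
  rw [Real.closedBall_eq_Icc, extremePoints_Icc (by norm_num)]
  exact toFinite _

lemma span_cube_vertices_eq_top :
    Submodule.span ℝ ({x₁, -x₁, x₂, -x₂, x₃, -x₃, x₄, -x₄} : Set Linf3) = ⊤ := by
  refine Submodule.eq_top_iff'.2 fun x ↦ ?_
  have hx : x = ((x 0 + x 2) / 2) • x₁ + ((x 1 - x 0) / 2) • x₂ + ((x 2 - x 1) / 2) • x₃ := by
    ext j
    fin_cases j <;> simp [x₁, x₂, x₃] <;> ring
  rw [hx]
  refine add_mem (add_mem ?_ ?_) ?_ <;>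
    exact Submodule.smul_mem _ _ (Submodule.subset_span (by simp))

lemma Sk_one_eq_MTExt {T : Linf3 →L[ℝ] L13}
    (hMT : MTExt T = {x₁, -x₁, x₂, -x₂, x₃, -x₃, x₄, -x₄}) (h1 : (Sk T 1).encard = 8) :
    Sk T 1 = MTExt T := by
  have hfin : (MTExt T).Finite := hMT ▸ toFinite _
  have hcard : (MTExt T).encard ≤ 8 := by
    rw [hMT]
    grw [encard_insert_le, encard_insert_le, encard_insert_le, encard_insert_le,
      encard_insert_le, encard_insert_le, encard_insert_le, encard_singleton]
    norm_num
  exact hfin.eq_of_subset_of_encard_le' (sep_subset _ _) (hcard.trans h1.ge)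

end Cube

theorem stmt_9
    (T : Linf3 →L[ℝ] L13) (hT : ‖T‖ = 1)
    (hMT : MTExt T = {x₁, -x₁, x₂, -x₂, x₃, -x₃, x₄, -x₄})
    (h1 : (Sk T 1).encard = 8)
    (hJ : ∀ xi ∈ Sk T 1, ∀ xj ∈ Sk T 1,
      pm (suppFunctionals (T xi)) = pm (suppFunctionals (T xj)))
    :
    finrank ℝ (Submodule.span ℝ (suppFunctionals T)) = 3 := by
  have hS : Sk T 1 = MTExt T := Sk_one_eq_MTExt hMT h1
  have hspan : Submodule.span ℝ (MTExt T) = ⊤ := by rw [hMT, span_cube_vertices_eq_top]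
  rw [stmt_9_general T hT (finite_extremePoints_closedBall_pi _) (fun x hx ↦ (hS.ge hx).2)
    (fun x hx y hy ↦ hJ x (hS.ge hx) y (hS.ge hy))]
  change finrank ℝ (Submodule.span ℝ (MTExt T)) = 3
  rw [hspan, finrank_top, finrank_fin_fun]
end
end

section
/- Let X = ℓ∞³, Y = ℓ₁³, and let T : X → Y be a bounded linear operator with ‖T‖ = 1 such that M_T ∩ Ext(B_X) = {±x₁, ±x₂, ±x₃, ±x₄}. Suppose |S₁| = 4, |S₂| = 4 and |S₃| = 0. If it is NOT the case that both ±J(Tx_i) = ±J(Tx_j) for all x_i, x_j ∈ S₁ and ±J(Tx_i) ⊆ ±Ext J(Tx_k) for all x_i ∈ S₁, x_k ∈ S₂, then T is 6-smooth, i.e., dim span J(T) = 6. -/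
open Metric Set Module Pointwise

noncomputable section

/-!
The functionals `A ↦ φ (A x)`, with `x` a vertex of the cube and `φ` a sign functional on `ℓ₁³`,
norm the space of operators, so `span J(T)` is the sum over the four vertices `xᵢ` of the copies
`xᵢ ⊗ Vᵢ` of `Vᵢ = span J(Txᵢ)`. The only linear relation between the vertices is
`x₁ - x₂ + x₃ - x₄ = 0`, whence `dim span J(T) = ∑ dim Vᵢ - dim ⋂ Vᵢ`, and here `∑ dim Vᵢ = 6`.
A nonzero element of `⋂ Vᵢ` would span each of the one-dimensional `Vᵢ`; it could then be taken to
be a sign functional, and a sign functional in the span of two independent ones is plus or minus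
one of them. This is exactly the excluded configuration, so `⋂ Vᵢ = 0`.
-/

section LinearAlgebra

variable {K M N κ : Type*} [Field K] [AddCommGroup M] [Module K M] [AddCommGroup N] [Module K N]
  [Fintype κ]

lemma range_lsum_comp_subtype [DecidableEq κ] (L : κ → M →ₗ[K] N) (V : κ → Submodule K M) :
    LinearMap.range (LinearMap.lsum K (fun k => V k) K fun k => L k ∘ₗ (V k).subtype) =
      ⨆ k, (V k).map (L k) := by
  simp only [LinearMap.range_eq_map, ← LinearMap.iSup_range_single, Submodule.map_iSup,
    ← Submodule.map_comp]
  refine iSup_congr fun k => ?_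
  have hsingle : LinearMap.lsum K (fun k => V k) K (fun k => L k ∘ₗ (V k).subtype) ∘ₗ
      LinearMap.single K (fun k => V k) k = L k ∘ₗ (V k).subtype :=
    LinearMap.ext fun v => LinearMap.lsum_piSingle ..
  rw [hsingle, Submodule.map_comp, ← LinearMap.range_eq_map, Submodule.range_subtype]

theorem finrank_iSup_map_add_finrank_iInf [Nonempty κ] {L : κ → M →ₗ[K] N} {c : κ → K}
    (hc : ∀ k, c k ≠ 0)
    (hL : ∀ g : κ → M, ∑ k, L k (g k) = 0 ↔ ∃ h, ∀ k, g k = c k • h)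
    (V : κ → Submodule K M) [∀ k, FiniteDimensional K (V k)] :
    finrank K (⨆ k, (V k).map (L k) : Submodule K N) + finrank K (⨅ k, V k : Submodule K M) =
      ∑ k, finrank K (V k) := by
  classical
  let Ψ : (∀ k, V k) →ₗ[K] N := LinearMap.lsum K (fun k => V k) K fun k => L k ∘ₗ (V k).subtype
  let Δ : (⨅ k, V k : Submodule K M) →ₗ[K] ∀ k, V k :=
    LinearMap.pi fun k => c k • Submodule.inclusion (iInf_le V k)
  have hker : LinearMap.ker Ψ = LinearMap.range Δ := by
    ext g
    have hΨ : Ψ g = ∑ k, L k (g k) := by simp [Ψ, LinearMap.lsum_apply]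
    rw [LinearMap.mem_ker, hΨ, hL, LinearMap.mem_range]
    constructor
    · rintro ⟨h, hg⟩
      have hmem : h ∈ ⨅ k, V k := (Submodule.mem_iInf V).2 fun k => by
        rw [← (V k).smul_mem_iff (hc k), ← hg k]
        exact (g k).2
      exact ⟨⟨h, hmem⟩, funext fun k => Subtype.ext (hg k).symm⟩
    · rintro ⟨h, rfl⟩
      exact ⟨h, fun k => rfl⟩
  have hinj : Function.Injective Δ := by
    intro h h' hh
    let k : κ := Classical.arbitrary κ
    exact Subtype.ext (smul_right_injective M (hc k) congr(($hh k).1))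
  rw [← range_lsum_comp_subtype, ← LinearMap.finrank_range_of_inj hinj, ← hker,
    LinearMap.finrank_range_add_finrank_ker, Module.finrank_pi_fintype]

lemma exists_linearIndependent_pair_span_eq_of_finrank_span_eq_two {S : Set M}
    (hS : finrank K (Submodule.span K S) = 2) :
    ∃ u ∈ S, ∃ v ∈ S, LinearIndependent K ![u, v] ∧
      Submodule.span K {u, v} = Submodule.span K S := by
  have : FiniteDimensional K (Submodule.span K S) := .of_finrank_pos (by lia)
  have hbasis := Submodule.exists_fun_fin_finrank_span_eq K S
  rw [hS] at hbasis
  obtain ⟨w, hw, hspan, hindep⟩ := hbasis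
  have hpair : w = ![w 0, w 1] := funext fun i => by fin_cases i <;> rfl
  have hrange : range w = {w 0, w 1} := by
    ext
    simp [Fin.exists_fin_two, eq_comm]
  exact ⟨w 0, hw 0, w 1, hw 1, hpair ▸ hindep, hrange ▸ hspan⟩

end LinearAlgebra

lemma sum_eq_of_card_filter_add_eq {ι : Type*} [Fintype ι] {d : ι → ℕ} {a b m n : ℕ} (hab : a ≠ b)
    (hm : Finset.card {i | d i = a} = m) (hn : Finset.card {i | d i = b} = n)
    (hmn : Fintype.card ι = m + n) : ∑ i, d i = m * a + n * b := by
  classical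
  have hb : Finset.univ.filter (fun i => d i = b) = Finset.univ.filter fun i => ¬d i = a := by
    refine Finset.eq_of_subset_of_card_le
      (Finset.monotone_filter_right _ fun i _ (hi : d i = b) => hi ▸ hab.symm) ?_
    have := Finset.card_filter_add_card_filter_not (s := Finset.univ) fun i => d i = a
    rw [Finset.card_univ] at this
    lia
  rw [← Finset.sum_filter_add_sum_filter_not _ fun i => d i = a, ← hb,
    Finset.sum_const_nat fun i hi => (Finset.mem_filter.1 hi).2,
    Finset.sum_const_nat fun i hi => (Finset.mem_filter.1 hi).2, hm, hn]

section SupportFunctionals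

variable {E : Type*} [NormedAddCommGroup E] [NormedSpace ℝ E] {y : E} {f : E →L[ℝ] ℝ}

/-- The linear span of the supporting functionals of `y`; its dimension is the order of
smoothness of `y`. -/
abbrev suppSpan (y : E) : Submodule ℝ (E →L[ℝ] ℝ) :=
  Submodule.span ℝ (suppFunctionals y)

lemma neg_mem_pm {A : Set (E →L[ℝ] ℝ)} : -f ∈ pm A ↔ f ∈ pm A := by
  simp only [pm, mem_union, Set.mem_neg, neg_neg, or_comm]

lemma pm_subset_span (A : Set (E →L[ℝ] ℝ)) : pm A ⊆ (Submodule.span ℝ A : Set (E →L[ℝ] ℝ)) := by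
  rintro f (hf | hf)
  · exact Submodule.subset_span hf
  · rw [SetLike.mem_coe, ← neg_mem_iff]
    exact Submodule.subset_span hf

lemma mem_suppFunctionals_of_norm_le_one (hf : ‖f‖ ≤ 1) (hy : ‖y‖ ≤ 1) (h : f y = 1) :
    f ∈ suppFunctionals y := by
  refine ⟨hf.antisymm ?_, h⟩
  calc 1 = ‖f y‖ := by rw [h, norm_one]
    _ ≤ ‖f‖ * 1 := f.le_opNorm_of_le hy
    _ = ‖f‖ := mul_one _

lemma mem_pm_suppFunctionals_of_norm_apply_eq_one (hf : ‖f‖ ≤ 1) (hy : ‖y‖ ≤ 1)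
    (h : ‖f y‖ = 1) : f ∈ pm (suppFunctionals y) := by
  rcases eq_or_eq_neg_of_abs_eq h with h | h
  · exact Or.inl (mem_suppFunctionals_of_norm_le_one hf hy h)
  · exact Or.inr (mem_suppFunctionals_of_norm_le_one (by rwa [norm_neg]) hy (by simp [h]))

lemma suppFunctionals_neg (y : E) : suppFunctionals (-y) = -suppFunctionals y := by
  ext f
  simp [suppFunctionals]

lemma suppSpan_neg (y : E) : suppSpan (-y) = suppSpan y := by
  rw [suppSpan, suppFunctionals_neg, Submodule.span_neg]

lemma suppSpan_eq_span_singleton (hd : finrank ℝ (suppSpan y) = 1) (hf : f ∈ suppSpan y)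
    (hf0 : f ≠ 0) : suppSpan y = Submodule.span ℝ {f} := by
  have : FiniteDimensional ℝ (suppSpan y) := .of_finrank_pos (hd ▸ one_pos)
  refine (Submodule.eq_of_le_of_finrank_eq ?_ ?_).symm
  · rwa [Submodule.span_singleton_le_iff_mem]
  · rw [finrank_span_singleton hf0, hd]

lemma suppSpan_le_suppSpan (hd : finrank ℝ (suppSpan y) = 1) {z : E} (hf0 : f ≠ 0)
    (hy : f ∈ suppSpan y) (hz : f ∈ suppSpan z) : suppSpan y ≤ suppSpan z := by
  rw [suppSpan_eq_span_singleton hd hy hf0]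
  exact (Submodule.span_singleton_le_iff_mem f _).2 hz

lemma norm_eq_one_of_mem_pm_suppFunctionals (hf : f ∈ pm (suppFunctionals y)) : ‖f‖ = 1 := by
  rcases hf with hf | hf
  · exact hf.1
  · rw [← norm_neg]
    exact hf.1

lemma eq_or_eq_neg_of_mem_suppSpan (hd : finrank ℝ (suppSpan y) = 1) {g : E →L[ℝ] ℝ}
    (hf : f ∈ suppSpan y) (hf1 : ‖f‖ = 1) (hg : g ∈ suppSpan y) (hg1 : ‖g‖ = 1) :
    f = g ∨ f = -g := by
  have hg0 : g ≠ 0 := norm_ne_zero_iff.1 (hg1.symm ▸ one_ne_zero)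
  rw [suppSpan_eq_span_singleton hd hg hg0] at hf
  obtain ⟨a, rfl⟩ := Submodule.mem_span_singleton.1 hf
  have ha : |a| = 1 := by simpa [norm_smul, hg1] using hf1
  rcases eq_or_eq_neg_of_abs_eq ha with rfl | rfl
  · exact Or.inl (one_smul ℝ g)
  · exact Or.inr (neg_one_smul ℝ g)

lemma pm_suppFunctionals_eq_suppSpan_inter_sphere (hd : finrank ℝ (suppSpan y) = 1) :
    pm (suppFunctionals y) = (suppSpan y : Set (E →L[ℝ] ℝ)) ∩ sphere 0 1 := by
  apply Subset.antisymm
  · exact fun f hf => ⟨pm_subset_span _ hf,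
      mem_sphere_zero_iff_norm.2 (norm_eq_one_of_mem_pm_suppFunctionals hf)⟩
  · rintro g ⟨hg, hg1⟩
    obtain ⟨f, hf⟩ : (suppFunctionals y).Nonempty := by
      refine nonempty_iff_ne_empty.2 fun hempty => ?_
      rw [suppSpan, hempty, Submodule.span_empty, finrank_bot] at hd
      exact zero_ne_one hd
    rcases eq_or_eq_neg_of_mem_suppSpan hd hg (mem_sphere_zero_iff_norm.1 hg1)
      (Submodule.subset_span hf) hf.1 with rfl | rfl
    · exact Or.inl hf
    · exact neg_mem_pm.2 (Or.inl hf)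

lemma pm_suppFunctionals_congr {z : E} (hy : finrank ℝ (suppSpan y) = 1)
    (hz : finrank ℝ (suppSpan z) = 1) (h : suppSpan y = suppSpan z) :
    pm (suppFunctionals y) = pm (suppFunctionals z) := by
  rw [pm_suppFunctionals_eq_suppSpan_inter_sphere hy,
    pm_suppFunctionals_eq_suppSpan_inter_sphere hz, h]

end SupportFunctionals

section Norming

variable {E ι : Type*} [NormedAddCommGroup E] [NormedSpace ℝ E]

/-- A family of functionals in the dual ball at which every vector attains its norm. A finite
norming family exists precisely when the norm is polyhedral. -/
structure IsNorming (φ : ι → E →L[ℝ] ℝ) : Prop where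
  norm_le_one : ∀ i, ‖φ i‖ ≤ 1
  exists_norm_le : ∀ x, ∃ i, ‖x‖ ≤ ‖φ i x‖

variable [Finite ι] {φ : ι → E →L[ℝ] ℝ} {x : E}

open Filter Topology in
lemma IsNorming.exists_pos_norm_add_smul_le_one (hφ : IsNorming φ) (hx : ‖x‖ ≤ 1) {v : E}
    (hv : ∀ i, ‖φ i x‖ = 1 → φ i v = 0) : ∃ ε : ℝ, 0 < ε ∧ ‖x + ε • v‖ ≤ 1 := by
  have hsmall : ∀ᶠ ε : ℝ in 𝓝 0, ∀ i, ‖φ i (x + ε • v)‖ ≤ 1 := by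
    refine eventually_all.2 fun i => ?_
    rcases ((φ i).le_of_opNorm_le_of_le (hφ.norm_le_one i) hx).eq_or_lt with hi | hi
    · have hi : ‖φ i x‖ = 1 := by simpa using hi
      simp only [map_add, map_smul, hv i hi, smul_zero, add_zero, hi, le_refl, eventually_true]
    · have hcont : Continuous fun ε : ℝ => ‖φ i (x + ε • v)‖ := by fun_prop
      refine (hcont.tendsto 0).eventually_le_const ?_
      simpa using hi
  obtain ⟨ε, hε, hpos⟩ :=
    ((hsmall.filter_mono nhdsWithin_le_nhds).and (self_mem_nhdsWithin (s := Ioi 0))).exists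
  obtain ⟨i, hi⟩ := hφ.exists_norm_le (x + ε • v)
  exact ⟨ε, hpos, hi.trans (hε i)⟩

lemma IsNorming.apply_eq_zero_of_mem_suppFunctionals (hφ : IsNorming φ) (hx : ‖x‖ ≤ 1)
    {f : E →L[ℝ] ℝ} (hf : f ∈ suppFunctionals x) {v : E}
    (hv : ∀ i, ‖φ i x‖ = 1 → φ i v = 0) : f v = 0 := by
  -- The ball contains a segment through `x` in direction `v`, on which `f` is maximal at `x`.
  have hle : ∀ w : E, (∀ i, ‖φ i x‖ = 1 → φ i w = 0) → f w ≤ 0 := by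
    intro w hw
    obtain ⟨ε, hε, hnorm⟩ := hφ.exists_pos_norm_add_smul_le_one hx hw
    have : 1 + ε * f w ≤ 1 := calc
      1 + ε * f w = f (x + ε • w) := by simp [hf.2]
      _ ≤ ‖f (x + ε • w)‖ := Real.le_norm_self _
      _ ≤ 1 * 1 := f.le_of_opNorm_le_of_le hf.1.le hnorm
      _ = 1 := mul_one 1
    exact nonpos_of_mul_nonpos_right (by linarith) hε
  refine le_antisymm (hle v hv) ?_
  simpa using hle (-v) fun i hi => by simp [hv i hi]

theorem IsNorming.suppSpan_eq (hφ : IsNorming φ) (hx : ‖x‖ ≤ 1) :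
    suppSpan x = Submodule.span ℝ (φ '' {i | ‖φ i x‖ = 1}) := by
  apply le_antisymm <;> rw [Submodule.span_le]
  · intro f hf
    let toLin := ContinuousLinearMap.coeLM (R := ℝ) (M := E) (N₃ := ℝ) ℝ
    have hker : ⨅ i : {i | ‖φ i x‖ = 1}, LinearMap.ker (toLin (φ i)) ≤
        LinearMap.ker (toLin f) := by
      intro v hv
      simp only [Submodule.mem_iInf, LinearMap.mem_ker, Subtype.forall] at hv ⊢
      exact hφ.apply_eq_zero_of_mem_suppFunctionals hx hf hv
    have hmem := mem_span_of_iInf_ker_le_ker hker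
    rwa [image_eq_range, SetLike.mem_coe,
      ← Submodule.apply_mem_span_image_iff_mem_span (f := toLin)
        ContinuousLinearMap.coe_injective, ← range_comp]
  · rintro _ ⟨i, hi, rfl⟩
    exact pm_subset_span _
      (mem_pm_suppFunctionals_of_norm_apply_eq_one (hφ.norm_le_one i) hx hi)

lemma IsNorming.finiteDimensional_suppSpan (hφ : IsNorming φ) (hx : ‖x‖ ≤ 1) :
    FiniteDimensional ℝ (suppSpan x) := by
  rw [hφ.suppSpan_eq hx]
  exact FiniteDimensional.span_of_finite ℝ (toFinite _)

end Norming

section Operators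

variable {X Y : Type*} [NormedAddCommGroup X] [NormedSpace ℝ X] [NormedAddCommGroup Y]
  [NormedSpace ℝ Y]

/-- The elementary tensor map `f ↦ x ⊗ f`, where `x ⊗ f` is the functional `A ↦ f (A x)` on the
space of operators. -/
def evalDual (x : X) : (Y →L[ℝ] ℝ) →ₗ[ℝ] ((X →L[ℝ] Y) →L[ℝ] ℝ) :=
  (ContinuousLinearMap.precomp ℝ (ContinuousLinearMap.apply ℝ Y x)).toLinearMap

lemma evalDual_apply (x : X) (f : Y →L[ℝ] ℝ) (A : X →L[ℝ] Y) : evalDual x f A = f (A x) := rfl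

variable {κ ι : Type*} {x : κ → X} {φ : ι → Y →L[ℝ] ℝ} {T : X →L[ℝ] Y}

theorem isNorming_evalDual [Finite κ] [Nonempty κ] [Finite ι]
    (hx : IsNorming fun k => NormedSpace.inclusionInDoubleDual ℝ X (x k)) (hφ : IsNorming φ) :
    IsNorming fun p : κ × ι => evalDual (x p.1) (φ p.2) := by
  refine ⟨fun ⟨k, i⟩ => ?_, fun A => ?_⟩
  · refine ContinuousLinearMap.opNorm_le_bound _ zero_le_one fun A => ?_
    calc ‖φ i (A (x k))‖ ≤ ‖(φ i).comp A‖ := by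
          simpa using ContinuousLinearMap.le_of_opNorm_le _ (hx.norm_le_one k) ((φ i).comp A)
      _ ≤ ‖φ i‖ * ‖A‖ := ContinuousLinearMap.opNorm_comp_le _ _
      _ ≤ 1 * ‖A‖ := by gcongr; exact hφ.norm_le_one i
  · have : Nonempty ι := ⟨(hφ.exists_norm_le 0).choose⟩
    obtain ⟨p, hp⟩ := Finite.exists_max fun p : κ × ι => ‖φ p.2 (A (x p.1))‖
    refine ⟨p, ContinuousLinearMap.opNorm_le_bound _ (norm_nonneg _) fun v => ?_⟩
    obtain ⟨i, hi⟩ := hφ.exists_norm_le (A v)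
    obtain ⟨k, hk⟩ := hx.exists_norm_le ((φ i).comp A)
    calc ‖A v‖ ≤ ‖(φ i).comp A v‖ := hi
      _ ≤ ‖(φ i).comp A‖ * ‖v‖ := ContinuousLinearMap.le_opNorm _ _
      _ ≤ ‖φ p.2 (A (x p.1))‖ * ‖v‖ := by gcongr; exact hk.trans (hp (k, i))

lemma IsNorming.norm_operator_apply_le_one
    (hx : IsNorming fun k => NormedSpace.inclusionInDoubleDual ℝ X (x k)) (hT : ‖T‖ ≤ 1) (k : κ) :
    ‖T (x k)‖ ≤ 1 := by
  have hxk : ‖x k‖ ≤ 1 := by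
    rw [← (NormedSpace.inclusionInDoubleDualLi ℝ).norm_map (x k)]
    exact hx.norm_le_one k
  simpa using T.le_of_opNorm_le_of_le hT hxk

theorem IsNorming.suppSpan_operator [Finite κ] [Nonempty κ] [Finite ι]
    (hx : IsNorming fun k => NormedSpace.inclusionInDoubleDual ℝ X (x k)) (hφ : IsNorming φ)
    (hT : ‖T‖ ≤ 1) :
    suppSpan T = ⨆ k, (suppSpan (T (x k))).map (evalDual (x k)) := by
  simp only [(isNorming_evalDual hx hφ).suppSpan_eq hT,
    hφ.suppSpan_eq (hx.norm_operator_apply_le_one hT _), Submodule.map_span,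
    ← Submodule.span_iUnion]
  congr 1
  ext F
  simp [evalDual_apply]

/-- A family `x` is a circuit with coefficients `c` if `c` has no zero entry and the linear
relations of `x` are exactly the multiples of `∑ k, c k • x k = 0`. -/
structure IsCircuit [Fintype κ] (c : κ → ℝ) (x : κ → X) : Prop where
  coeff_ne_zero : ∀ k, c k ≠ 0
  sum_smul_eq_zero_iff : ∀ a : κ → ℝ, ∑ k, a k • x k = 0 ↔ ∃ t : ℝ, a = t • c

variable [Fintype κ] {c : κ → ℝ}

lemma sum_smul_eq_zero_of_sum_evalDual_eq_zero {g : κ → Y →L[ℝ] ℝ}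
    (h : ∑ k, evalDual (x k) (g k) = 0) (y : Y) : ∑ k, g k y • x k = 0 := by
  refine SeparatingDual.eq_zero_of_forall_dual_eq_zero (R := ℝ) fun f => ?_
  simpa [evalDual_apply, mul_comm] using congr($h (f.smulRight y))

lemma IsCircuit.sum_evalDual_eq_zero_iff [Nonempty κ] (hx : IsCircuit c x)
    (g : κ → Y →L[ℝ] ℝ) :
    ∑ k, evalDual (x k) (g k) = 0 ↔ ∃ h : Y →L[ℝ] ℝ, ∀ k, g k = c k • h := by
  constructor
  · intro hg
    let j : κ := Classical.arbitrary κ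
    refine ⟨(c j)⁻¹ • g j, fun k => ContinuousLinearMap.ext fun y => ?_⟩
    obtain ⟨t, ht⟩ := (hx.sum_smul_eq_zero_iff _).1 (sum_smul_eq_zero_of_sum_evalDual_eq_zero hg y)
    have hgt (k : κ) : g k y = t * c k := congrFun ht k
    have hj : c j ≠ 0 := hx.coeff_ne_zero j
    simp only [smul_apply, hgt, smul_eq_mul]
    field_simp
  · rintro ⟨h, hg⟩
    have hrel : ∑ k, c k • x k = 0 := (hx.sum_smul_eq_zero_iff c).2 ⟨1, (one_smul ℝ c).symm⟩
    ext A
    calc (∑ k, evalDual (x k) (g k)) A = h (A (∑ k, c k • x k)) := by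
          simp [evalDual_apply, hg]
      _ = 0 := by rw [hrel, map_zero, map_zero]

theorem IsCircuit.finrank_suppSpan_operator [Nonempty κ] [Finite ι] (hxc : IsCircuit c x)
    (hx : IsNorming fun k => NormedSpace.inclusionInDoubleDual ℝ X (x k)) (hφ : IsNorming φ)
    (hT : ‖T‖ ≤ 1) :
    finrank ℝ (suppSpan T) +
        finrank ℝ (⨅ k, suppSpan (T (x k)) : Submodule ℝ (Y →L[ℝ] ℝ)) =
      ∑ k, finrank ℝ (suppSpan (T (x k))) := by
  have (k : κ) : FiniteDimensional ℝ (suppSpan (T (x k))) :=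
    hφ.finiteDimensional_suppSpan (hx.norm_operator_apply_le_one hT k)
  rw [hx.suppSpan_operator hφ hT, finrank_iSup_map_add_finrank_iInf
    (L := fun k => evalDual (Y := Y) (x k)) hxc.coeff_ne_zero hxc.sum_evalDual_eq_zero_iff]

end Operators

section DualOfLinf

variable {ι : Type*} [Fintype ι] [DecidableEq ι] (f : (ι → ℝ) →L[ℝ] ℝ)

lemma apply_eq_sum_mul_single (v : ι → ℝ) : f v = ∑ j, v j * f (Pi.single j 1) := by
  conv_lhs => rw [pi_eq_sum_univ' v]
  simp only [map_sum, map_smul, smul_eq_mul]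

lemma opNorm_le_sum_abs_apply_single : ‖f‖ ≤ ∑ j, |f (Pi.single j 1)| := by
  refine f.opNorm_le_bound (by positivity) fun v => ?_
  calc ‖f v‖ = ‖∑ j, v j * f (Pi.single j 1)‖ := by rw [← apply_eq_sum_mul_single]
    _ ≤ ∑ j, ‖v j‖ * |f (Pi.single j 1)| := by
        simpa only [norm_mul, Real.norm_eq_abs] using
          norm_sum_le Finset.univ fun j => v j * f (Pi.single j 1)
    _ ≤ ∑ j, ‖v‖ * |f (Pi.single j 1)| := by gcongr with j; exact norm_le_pi_norm v j
    _ = (∑ j, |f (Pi.single j 1)|) * ‖v‖ := by rw [← Finset.mul_sum, mul_comm]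

end DualOfLinf

section Vertices

/-- The vertices of the cube `B_{ℓ∞³}`, one from each antipodal pair. -/
def vertex : Fin 4 → Linf3 := ![x₁, x₂, x₃, x₄]

lemma vertex_apply_two (i : Fin 4) : vertex i 2 = 1 := by
  fin_cases i <;> rfl

lemma vertex_injective : Function.Injective vertex := by
  intro i j h
  have h0 := congrFun h 0
  have h1 := congrFun h 1
  fin_cases i <;> fin_cases j <;> simp [vertex, x₁, x₂, x₃, x₄] at h0 h1 ⊢ <;>
    linarith

lemma norm_vertex_le_one (i : Fin 4) : ‖vertex i‖ ≤ 1 := by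
  refine (pi_norm_le_iff_of_nonneg zero_le_one).2 fun j => ?_
  fin_cases i <;> fin_cases j <;> simp [vertex, x₁, x₂, x₃, x₄]

lemma exists_vertex_sum_abs_le (a : Fin 3 → ℝ) :
    ∃ i, ∑ j, |a j| ≤ |∑ j, vertex i j * a j| := by
  by_contra! h
  have h0 : |a 0 + a 1 + a 2| < |a 0| + |a 1| + |a 2| := by
    simpa [Fin.sum_univ_three, vertex, x₁] using h 0
  have h1 : |-a 0 + a 1 + a 2| < |a 0| + |a 1| + |a 2| := by
    simpa [Fin.sum_univ_three, vertex, x₂] using h 1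
  have h2 : |-a 0 - a 1 + a 2| < |a 0| + |a 1| + |a 2| := by
    simpa [Fin.sum_univ_three, vertex, x₃, sub_eq_add_neg] using h 2
  have h3 : |a 0 - a 1 + a 2| < |a 0| + |a 1| + |a 2| := by
    simpa [Fin.sum_univ_three, vertex, x₄, sub_eq_add_neg] using h 3
  rw [abs_lt] at h0 h1 h2 h3
  rcases abs_cases (a 0) with ha | ha <;> rcases abs_cases (a 1) with hb | hb <;>
    rcases abs_cases (a 2) with hc | hc <;> linarith

lemma isNorming_vertex :
    IsNorming fun i => NormedSpace.inclusionInDoubleDual ℝ Linf3 (vertex i) := by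
  refine ⟨fun i => ?_, fun f => ?_⟩
  · exact (NormedSpace.double_dual_bound ℝ Linf3 _).trans (norm_vertex_le_one i)
  · obtain ⟨i, hi⟩ := exists_vertex_sum_abs_le fun j => f (Pi.single j 1)
    rw [← apply_eq_sum_mul_single f] at hi
    exact ⟨i, (opNorm_le_sum_abs_apply_single f).trans hi⟩

lemma isCircuit_vertex : IsCircuit ![1, -1, 1, -1] vertex := by
  refine ⟨fun i => by fin_cases i <;> norm_num, fun a => ⟨fun h => ?_, ?_⟩⟩
  · have h0 : a 0 - a 1 - a 2 + a 3 = 0 := by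
      simpa [Fin.sum_univ_four, vertex, x₁, x₂, x₃, x₄, sub_eq_add_neg] using congrFun h 0
    have h1 : a 0 + a 1 - a 2 - a 3 = 0 := by
      simpa [Fin.sum_univ_four, vertex, x₁, x₂, x₃, x₄, sub_eq_add_neg] using congrFun h 1
    have h2 : a 0 + a 1 + a 2 + a 3 = 0 := by
      simpa [Fin.sum_univ_four, vertex, x₁, x₂, x₃, x₄] using congrFun h 2
    have ha : a = ![a 0, -a 0, a 0, -a 0] := by
      ext i
      fin_cases i
      exacts [rfl, show a 1 = -a 0 by linarith, show a 2 = a 0 by linarith,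
        show a 3 = -a 0 by linarith]
    exact ⟨a 0, by simpa using ha⟩
  · rintro ⟨t, rfl⟩
    ext j
    fin_cases j <;> simp [Fin.sum_univ_four, vertex, x₁, x₂, x₃, x₄]

end Vertices

section SignFunctionals

variable {ι : Type*}

lemma eq_of_apply_single_eq [Finite ι] [DecidableEq ι] {f g : PiLp 1 (fun _ : ι => ℝ) →L[ℝ] ℝ}
    (h : ∀ i, f (PiLp.single 1 i 1) = g (PiLp.single 1 i 1)) : f = g := by
  have := Fintype.ofFinite ι
  apply ContinuousLinearMap.coe_injective
  refine (PiLp.basisFun 1 ℝ ι).ext fun i => ?_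
  simpa using h i

variable [Fintype ι] {r s t : ι → ℤˣ} {y z : PiLp 1 (fun _ : ι => ℝ)}
  {f : PiLp 1 (fun _ : ι => ℝ) →L[ℝ] ℝ}

/-- The functional `y ↦ ∑ i, s i * y i` on `ℓ₁` attached to a choice of signs `s`. -/
def signFunctional (s : ι → ℤˣ) : PiLp 1 (fun _ : ι => ℝ) →L[ℝ] ℝ :=
  ∑ i, ((s i : ℤ) : ℝ) • PiLp.proj 1 (fun _ : ι => ℝ) i

lemma signFunctional_apply (s : ι → ℤˣ) (y : PiLp 1 (fun _ : ι => ℝ)) :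
    signFunctional s y = ∑ i, ((s i : ℤ) : ℝ) * y i := by
  simp [signFunctional]

lemma signFunctional_neg (s : ι → ℤˣ) : signFunctional (-s) = -signFunctional s := by
  ext y
  simp [signFunctional_apply]

lemma isNorming_signFunctional : IsNorming (signFunctional (ι := ι)) := by
  refine ⟨fun s => ContinuousLinearMap.opNorm_le_bound _ zero_le_one fun y => ?_, fun y => ?_⟩
  · calc ‖signFunctional s y‖ ≤ ∑ i, ‖((s i : ℤ) : ℝ) * y i‖ := by
          rw [signFunctional_apply]
          exact norm_sum_le _ _
      _ = 1 * ‖y‖ := by simp [PiLp.norm_eq_of_L1, abs_unit_intCast]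
  · let s : ι → ℤˣ := fun i => if 0 ≤ y i then 1 else -1
    have hs (i : ι) : ((s i : ℤ) : ℝ) * y i = |y i| := by
      by_cases hi : 0 ≤ y i
      · simp [s, hi, abs_of_nonneg]
      · simp [s, hi, abs_of_neg (not_le.1 hi)]
    refine ⟨s, ?_⟩
    calc ‖y‖ = signFunctional s y := by simp [signFunctional_apply, hs, PiLp.norm_eq_of_L1]
      _ ≤ ‖signFunctional s y‖ := Real.le_norm_self _

lemma abs_apply_single_le [DecidableEq ι] (hf : ‖f‖ ≤ 1) (i : ι) : |f (PiLp.single 1 i 1)| ≤ 1 := by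
  simpa using f.le_of_opNorm_le_of_le hf (PiLp.norm_single 1 (fun _ : ι => ℝ) i (1 : ℝ)).le

lemma signFunctional_apply_single [DecidableEq ι] (s : ι → ℤˣ) (i : ι) :
    signFunctional s (PiLp.single 1 i 1) = ((s i : ℤ) : ℝ) := by
  simp [signFunctional_apply]

lemma signFunctional_mem_extremePoints_closedBall (s : ι → ℤˣ) :
    signFunctional s ∈ extremePoints ℝ (closedBall 0 1) := by
  classical
  rw [mem_extremePoints_iff_left]
  refine ⟨by simpa using isNorming_signFunctional.norm_le_one s, ?_⟩
  rintro f hf g hg ⟨a, b, ha, hb, hab, hs⟩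
  refine eq_of_apply_single_eq fun i => ?_
  have hmem {h : PiLp 1 (fun _ : ι => ℝ) →L[ℝ] ℝ} (hh : h ∈ closedBall 0 1) :
      h (PiLp.single 1 i 1) ∈ closedBall (0 : ℝ) 1 :=
    mem_closedBall_zero_iff.2 (abs_apply_single_le (mem_closedBall_zero_iff.1 hh) i)
  have hext : signFunctional s (PiLp.single 1 i 1) ∈ extremePoints ℝ (closedBall (0 : ℝ) 1) := by
    rw [StrictConvexSpace.extremePoints_closedBall_eq_sphere, signFunctional_apply_single]
    exact mem_sphere_zero_iff_norm.2 (abs_unit_intCast _)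
  exact (mem_extremePoints_iff_left.1 hext).2 _ (hmem hf) _ (hmem hg)
    ⟨a, b, ha, hb, hab, congr($hs (PiLp.single 1 i 1))⟩

lemma signFunctional_mem_extremePoints_suppFunctionals
    (h : signFunctional s ∈ suppFunctionals y) :
    signFunctional s ∈ extremePoints ℝ (suppFunctionals y) :=
  inter_extremePoints_subset_extremePoints_of_subset
    (fun _ hf => mem_closedBall_zero_iff.2 hf.1.le)
    ⟨h, signFunctional_mem_extremePoints_closedBall s⟩

lemma signFunctional_mem_pm_extremePoints_of_norm_apply_eq_one
    (hy : ‖y‖ ≤ 1) (h : ‖signFunctional s y‖ = 1) :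
    signFunctional s ∈ pm (extremePoints ℝ (suppFunctionals y)) := by
  rcases mem_pm_suppFunctionals_of_norm_apply_eq_one (isNorming_signFunctional.norm_le_one s) hy h
    with hs | hs
  · exact Or.inl (signFunctional_mem_extremePoints_suppFunctionals hs)
  · rw [Set.mem_neg, ← signFunctional_neg] at hs
    rw [← neg_mem_pm, ← signFunctional_neg]
    exact Or.inl (signFunctional_mem_extremePoints_suppFunctionals hs)

lemma exists_eq_of_linearIndependent_signFunctional
    (hst : LinearIndependent ℝ ![signFunctional s, signFunctional t]) : ∃ i, s i = t i := by
  rw [LinearIndependent.pair_iff] at hst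
  by_contra! h
  have hneg : s = -t := funext fun i => Int.units_ne_iff_eq_neg.1 (h i)
  exact one_ne_zero (hst 1 1 (by simp [hneg, signFunctional_neg])).1

lemma exists_eq_neg_of_linearIndependent_signFunctional
    (hst : LinearIndependent ℝ ![signFunctional s, signFunctional t]) : ∃ i, s i = -t i := by
  rw [LinearIndependent.pair_iff] at hst
  by_contra! h
  have heq : s = t := funext fun i => neg_neg (t i) ▸ Int.units_ne_iff_eq_neg.1 (h i)
  exact one_ne_zero (hst 1 (-1) (by simp [heq])).1

lemma signFunctional_mem_pm_pair
    (hst : LinearIndependent ℝ ![signFunctional s, signFunctional t])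
    (hr : signFunctional r ∈ Submodule.span ℝ {signFunctional s, signFunctional t}) :
    signFunctional r ∈ pm {signFunctional s, signFunctional t} := by
  classical
  obtain ⟨i, hi⟩ := exists_eq_of_linearIndependent_signFunctional hst
  obtain ⟨j, hj⟩ := exists_eq_neg_of_linearIndependent_signFunctional hst
  obtain ⟨a, b, hab⟩ := Submodule.mem_span_pair.1 hr
  have hcoord (k : ι) : |a * ((s k : ℤ) : ℝ) + b * ((t k : ℤ) : ℝ)| = 1 := by
    have := congr($hab (PiLp.single 1 k 1))
    simp only [add_apply, smul_apply, signFunctional_apply_single, smul_eq_mul] at this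
    rw [this, abs_unit_intCast]
  -- A coordinate where `s` and `t` agree and one where they differ force `{a, b} = {0, ±1}`.
  have hadd : |a + b| = 1 := by
    simpa [hi, ← add_mul, abs_mul, abs_unit_intCast] using hcoord i
  have hsub : |a - b| = 1 := by
    have := hcoord j
    rwa [hj, Units.val_neg, Int.cast_neg, mul_neg, neg_add_eq_sub, ← sub_mul, abs_mul,
      abs_unit_intCast, mul_one, abs_sub_comm] at this
  have hcases : (a = 1 ∧ b = 0 ∨ a = 0 ∧ b = 1) ∨ (a = -1 ∧ b = 0 ∨ a = 0 ∧ b = -1) := by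
    rcases eq_or_eq_neg_of_abs_eq hadd with h | h <;>
      rcases eq_or_eq_neg_of_abs_eq hsub with h' | h'
    · exact Or.inl (Or.inl ⟨by linarith, by linarith⟩)
    · exact Or.inl (Or.inr ⟨by linarith, by linarith⟩)
    · exact Or.inr (Or.inr ⟨by linarith, by linarith⟩)
    · exact Or.inr (Or.inl ⟨by linarith, by linarith⟩)
  rw [← hab]
  rcases hcases with (⟨rfl, rfl⟩ | ⟨rfl, rfl⟩) | ⟨rfl, rfl⟩ | ⟨rfl, rfl⟩ <;> simp [pm]

lemma signFunctional_mem_pm_extremePoints_of_mem_suppSpan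
    (hy : ‖y‖ ≤ 1) (hd : finrank ℝ (suppSpan y) = 2) (hr : signFunctional r ∈ suppSpan y) :
    signFunctional r ∈ pm (extremePoints ℝ (suppFunctionals y)) := by
  rw [isNorming_signFunctional.suppSpan_eq hy] at hd hr
  obtain ⟨_, ⟨s, hs, rfl⟩, _, ⟨t, ht, rfl⟩, hindep, hspan⟩ :=
    exists_linearIndependent_pair_span_eq_of_finrank_span_eq_two hd
  have hs := signFunctional_mem_pm_extremePoints_of_norm_apply_eq_one hy hs
  have ht := signFunctional_mem_pm_extremePoints_of_norm_apply_eq_one hy ht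
  rw [← hspan] at hr
  rcases signFunctional_mem_pm_pair hindep hr with (h | h) | (h | h)
  · rwa [h]
  · rwa [h]
  · rwa [← neg_mem_pm, h]
  · rwa [← neg_mem_pm, show -signFunctional r = _ from h]

lemma exists_eq_signFunctional_of_mem_pm_suppFunctionals
    (hy : ‖y‖ = 1) (hd : finrank ℝ (suppSpan y) = 1) (hf : f ∈ pm (suppFunctionals y)) :
    ∃ s, f = signFunctional s := by
  obtain ⟨s, hs⟩ := isNorming_signFunctional.exists_norm_le y
  have hnorm := isNorming_signFunctional.norm_le_one s
  have hs1 : ‖signFunctional s y‖ = 1 :=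
    le_antisymm (by simpa using (signFunctional s).le_of_opNorm_le_of_le hnorm hy.le) (hy ▸ hs)
  have hs := mem_pm_suppFunctionals_of_norm_apply_eq_one hnorm hy.le hs1
  rcases eq_or_eq_neg_of_mem_suppSpan hd (pm_subset_span _ hf)
    (norm_eq_one_of_mem_pm_suppFunctionals hf) (pm_subset_span _ hs)
    (norm_eq_one_of_mem_pm_suppFunctionals hs) with h | h
  · exact ⟨s, h⟩
  · exact ⟨-s, h.trans (signFunctional_neg s).symm⟩

theorem pm_suppFunctionals_subset_pm_extremePoints
    (hy : ‖y‖ = 1) (hz : ‖z‖ ≤ 1) (hdy : finrank ℝ (suppSpan y) = 1)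
    (hdz : finrank ℝ (suppSpan z) = 2) (hle : suppSpan y ≤ suppSpan z) :
    pm (suppFunctionals y) ⊆ pm (extremePoints ℝ (suppFunctionals z)) := by
  intro f hf
  obtain ⟨s, rfl⟩ := exists_eq_signFunctional_of_mem_pm_suppFunctionals hy hdy hf
  exact signFunctional_mem_pm_extremePoints_of_mem_suppSpan hz hdz (hle (pm_subset_span _ hf))

end SignFunctionals

section VertexAttainment

variable {T : Linf3 →L[ℝ] L13}

lemma range_vertex_union_neg_range_vertex :
    range vertex ∪ -range vertex = {x₁, -x₁, x₂, -x₂, x₃, -x₃, x₄, -x₄} := by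
  have hrange : range vertex = {x₁, x₂, x₃, x₄} := by
    ext x
    simp [vertex, or_comm, or_left_comm]
  rw [hrange]
  ext x
  simp only [mem_union, Set.mem_neg, mem_insert_iff, mem_singleton_iff, neg_eq_iff_eq_neg]
  tauto

lemma iInf_suppSpan_vertex_le (hM : MTExt T = range vertex ∪ -range vertex) {x : Linf3}
    (hx : x ∈ MTExt T) : ⨅ i, suppSpan (T (vertex i)) ≤ suppSpan (T x) := by
  rw [hM] at hx
  rcases hx with ⟨i, rfl⟩ | ⟨i, hi⟩
  · exact iInf_le _ i
  · rw [← suppSpan_neg (T x), ← map_neg, ← hi]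
    exact iInf_le _ i

lemma Sk_eq_image_union_neg_image (hM : MTExt T = range vertex ∪ -range vertex) (k : ℕ) :
    Sk T k = vertex '' {i | finrank ℝ (suppSpan (T (vertex i))) = k} ∪
      -(vertex '' {i | finrank ℝ (suppSpan (T (vertex i))) = k}) := by
  let D : Set Linf3 := {x | finrank ℝ (suppSpan (T x)) = k}
  have hneg : -D = D := by
    ext x
    rw [Set.mem_neg, mem_ofPred_eq, mem_ofPred_eq, map_neg, suppSpan_neg]
  calc Sk T k = (range vertex ∪ -range vertex) ∩ D := congrArg (· ∩ D) hM
    _ = range vertex ∩ D ∪ -(range vertex ∩ D) := by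
        rw [Set.inter_neg, hneg, union_inter_distrib_right]
    _ = vertex '' (vertex ⁻¹' D) ∪ -(vertex '' (vertex ⁻¹' D)) := by
        rw [image_preimage_eq_range_inter]

lemma encard_Sk (hM : MTExt T = range vertex ∪ -range vertex) (k : ℕ) :
    (Sk T k).encard = 2 * Finset.card {i | finrank ℝ (suppSpan (T (vertex i))) = k} := by
  let F : Finset (Fin 4) := {i | finrank ℝ (suppSpan (T (vertex i))) = k}
  have hdisj : Disjoint (vertex '' F) (-(vertex '' F)) := by
    rw [disjoint_left]
    rintro _ ⟨i, -, rfl⟩ ⟨j, -, hj⟩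
    have := congrFun hj 2
    norm_num [vertex_apply_two] at this
  have hSk : Sk T k = vertex '' F ∪ -(vertex '' F) := by
    simpa [F] using Sk_eq_image_union_neg_image hM k
  rw [hSk, encard_union_eq hdisj, encard_neg, vertex_injective.encard_image,
    encard_coe_eq_coe_finsetCard, two_mul]

lemma card_vertex_eq_two_of_encard_Sk_eq_four (hM : MTExt T = range vertex ∪ -range vertex)
    {k : ℕ} (hk : (Sk T k).encard = 4) :
    Finset.card {i | finrank ℝ (suppSpan (T (vertex i))) = k} = 2 := by
  rw [encard_Sk hM] at hk
  exact Nat.eq_of_mul_eq_mul_left two_pos (by exact_mod_cast hk)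

lemma sum_finrank_suppSpan_vertex (hM : MTExt T = range vertex ∪ -range vertex)
    (h1 : (Sk T 1).encard = 4) (h2 : (Sk T 2).encard = 4) :
    ∑ i, finrank ℝ (suppSpan (T (vertex i))) = 6 :=
  sum_eq_of_card_filter_add_eq (by decide) (card_vertex_eq_two_of_encard_Sk_eq_four hM h1)
    (card_vertex_eq_two_of_encard_Sk_eq_four hM h2) rfl

end VertexAttainment

theorem stmt_14
    (T : Linf3 →L[ℝ] L13) (hT : ‖T‖ = 1)
    (hMT : MTExt T = {x₁, -x₁, x₂, -x₂, x₃, -x₃, x₄, -x₄})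
    (h1 : (Sk T 1).encard = 4) (h2 : (Sk T 2).encard = 4)
    (h3 : (Sk T 3).encard = 0)
    (hJ : ¬ ((∀ xi ∈ Sk T 1, ∀ xj ∈ Sk T 1,
        pm (suppFunctionals (T xi)) = pm (suppFunctionals (T xj))) ∧
      (∀ xi ∈ Sk T 1, ∀ xk ∈ Sk T 2,
        pm (suppFunctionals (T xi)) ⊆ pm (extremePoints ℝ (suppFunctionals (T xk))))))
    :
    finrank ℝ (Submodule.span ℝ (suppFunctionals T)) = 6 := by
  have hM := hMT.trans range_vertex_union_neg_range_vertex.symm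
  have hsum : ∑ i, finrank ℝ (suppSpan (T (vertex i))) = 6 := sum_finrank_suppSpan_vertex hM h1 h2
  have hbot : ⨅ i, suppSpan (T (vertex i)) = ⊥ := by
    by_contra hne
    obtain ⟨g, hg, hg0⟩ := Submodule.exists_mem_ne_zero_of_ne_bot hne
    have hgT {x : Linf3} {k : ℕ} (hx : x ∈ Sk T k) : g ∈ suppSpan (T x) :=
      iInf_suppSpan_vertex_le hM hx.1 hg
    have hnorm {x : Linf3} {k : ℕ} (hx : x ∈ Sk T k) : ‖T x‖ = 1 := hx.1.1.2.trans hT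
    refine hJ ⟨fun xi hi xj hj => ?_, fun xi hi xk hk => ?_⟩
    · exact pm_suppFunctionals_congr hi.2 hj.2 <|
        (suppSpan_le_suppSpan hi.2 hg0 (hgT hi) (hgT hj)).antisymm
          (suppSpan_le_suppSpan hj.2 hg0 (hgT hj) (hgT hi))
    · exact pm_suppFunctionals_subset_pm_extremePoints (hnorm hi) (hnorm hk).le hi.2 hk.2
        (suppSpan_le_suppSpan hi.2 hg0 (hgT hi) (hgT hk))
  have hdim := isCircuit_vertex.finrank_suppSpan_operator isNorming_vertex
    isNorming_signFunctional hT.le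
  rwa [hbot, finrank_bot, add_zero, hsum] at hdim
end
end
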